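/- arXiv:2507.04728 — 3 statements merged into one kernel-verified Lean document; each statement's English description precedes it below -/
import Mathlib

section
/- Let G~ be a mixed graph with underlying graph G, 0 ≤ κ(G) ≤ c(G), and r(G~) = 2m(G) − 2κ(G) + 1. Then for every vertex u lying on some even cycle of G: κ(G − u) = κ(G) − 1, m(G − u) = m(G) − 1, and r(G~ − u) = 2m(G − u) − 2κ(G − u) + a_u for some a_u ∈ {0,1}. -/
open scoped Classical

namespace MixedPaper

universe u

/-- A mixed graph: a finite simple graph together with an orientation of a subset
of its edges.  `arc u v = true` means there is an arc from `u` to `v`. -/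
structure MixedGraph (V : Type u) where
  graph : SimpleGraph V
  arc : V → V → Bool
  arc_adj : ∀ u v, arc u v → graph.Adj u v
  arc_antisymm : ∀ u v, arc u v → ¬ arc v u

variable {V : Type u}

/-- The Hermitian adjacency matrix of a mixed graph. -/
noncomputable def MixedGraph.hMatrix [Fintype V] [DecidableEq V] (M : MixedGraph V) :
    Matrix V V ℂ := fun u v =>
  if M.arc u v then Complex.I
  else if M.arc v u then -Complex.I
  else if M.graph.Adj u v then 1 else 0

/-- The H-rank of a mixed graph: the rank of its Hermitian adjacency matrix. -/
noncomputable def MixedGraph.hRank [Fintype V] [DecidableEq V] (M : MixedGraph V) : ℕ :=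
  M.hMatrix.rank

/-- The matching number of a simple graph. -/
noncomputable def matchingNumber (G : SimpleGraph V) : ℕ :=
  sSup {k | ∃ N : G.Subgraph, N.IsMatching ∧ N.edgeSet.ncard = k}

/-- A subgraph is a cycle subgraph if it is connected and every one of its vertices
has exactly two neighbours in it. -/
def IsCycleSubgraph {G : SimpleGraph V} (C : G.Subgraph) : Prop :=
  C.Connected ∧ ∀ v ∈ C.verts, {w | C.Adj v w}.ncard = 2

/-- κ(G) : the number of even cycles of G. -/
noncomputable def evenCycleCount (G : SimpleGraph V) : ℕ :=
  {C : G.Subgraph | IsCycleSubgraph C ∧ Even C.verts.ncard}.ncard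

/-- c(G) = |E(G)| - |V(G)| + ω(G), the cyclomatic number. -/
noncomputable def cyclomatic [Fintype V] (G : SimpleGraph V) : ℤ :=
  (G.edgeSet.ncard : ℤ) - (Fintype.card V : ℤ) + (Nat.card G.ConnectedComponent : ℤ)

/-- The induced mixed subgraph on a set of vertices. -/
def MixedGraph.induce (M : MixedGraph V) (S : Set V) : MixedGraph S where
  graph := M.graph.induce S
  arc := fun a b => M.arc a.1 b.1
  arc_adj := fun a b h => M.arc_adj a.1 b.1 h
  arc_antisymm := fun a b h => M.arc_antisymm a.1 b.1 h

/-- The mixed subgraph induced by a connected component of the underlying graph. -/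
def MixedGraph.comp (M : MixedGraph V) (c : M.graph.ConnectedComponent) :
    MixedGraph c.supp := M.induce c.supp

/-- The signature |f - b| of a closed walk in a mixed graph: the absolute difference
between the numbers of forward and backward arcs along the walk. -/
def walkSignature (M : MixedGraph V) {u : V} (w : M.graph.Walk u u) : ℕ :=
  ((w.darts.countP fun d => M.arc d.toProd.1 d.toProd.2 : ℤ) -
    (w.darts.countP fun d => M.arc d.toProd.2 d.toProd.1 : ℤ)).natAbs

/-- The signature of the cycle subgraph `C` of the mixed graph `M` satisfies the
predicate `P` (expressed via a closed walk traversing `C`; the signature does not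
depend on the choice of traversal). -/
def CycleSig (M : MixedGraph V) (C : M.graph.Subgraph) (P : ℕ → Prop) : Prop :=
  ∃ (u : V) (w : M.graph.Walk u u), w.IsCycle ∧
    {v | v ∈ w.support} = C.verts ∧ {e | e ∈ w.edges} = C.edgeSet ∧
    P (walkSignature M w)

/-- `C` is a pendant cycle with unique vertex `x` of degree 3. -/
def IsPendantCycle (G : SimpleGraph V) (C : G.Subgraph) (x : V) : Prop :=
  IsCycleSubgraph C ∧ x ∈ C.verts ∧ {w | G.Adj x w}.ncard = 3 ∧
    ∀ v ∈ C.verts, v ≠ x → {w | G.Adj v w}.ncard = 2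

/-- G has no pendant vertices (vertices of degree 1). -/
def NoPendantVerts (G : SimpleGraph V) : Prop := ∀ u : V, {w | G.Adj u w}.ncard ≠ 1

/-- The (distinct) cycles of G are pairwise vertex-disjoint. -/
def CyclesVertexDisjoint (G : SimpleGraph V) : Prop :=
  ∀ C₁ C₂ : G.Subgraph, IsCycleSubgraph C₁ → IsCycleSubgraph C₂ → C₁ ≠ C₂ →
    Disjoint C₁.verts C₂.verts

/-- The (distinct) even cycles of G are pairwise vertex-disjoint. -/
def EvenCyclesVertexDisjoint (G : SimpleGraph V) : Prop :=
  ∀ C₁ C₂ : G.Subgraph, IsCycleSubgraph C₁ → IsCycleSubgraph C₂ →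
    Even C₁.verts.ncard → Even C₂.verts.ncard → C₁ ≠ C₂ →
    Disjoint C₁.verts C₂.verts

/-- One pendant `K₂` deletion step, recorded on the surviving vertex sets:
`u` is pendant in the graph induced on `S` with unique neighbour `v` there,
and both are deleted. -/
def PendantStep (G : SimpleGraph V) (S T : Set V) : Prop :=
  ∃ u v, u ∈ S ∧ v ∈ S ∧ {w | w ∈ S ∧ G.Adj u w} = {v} ∧ T = S \ {u, v}

/-- `S` is reachable from the full vertex set by a sequence of pendant K₂ deletions. -/
def PendantReaches (G : SimpleGraph V) (S : Set V) : Prop :=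
  Relation.ReflTransGen (PendantStep G) Set.univ S

/-- The graph induced on `S` has no pendant vertices. -/
def NoPendantIn (G : SimpleGraph V) (S : Set V) : Prop :=
  ∀ u ∈ S, {w | w ∈ S ∧ G.Adj u w}.ncard ≠ 1

/-- `u` lies on some even cycle of `G`. -/
def OnEvenCycle (G : SimpleGraph V) (u : V) : Prop :=
  ∃ C : G.Subgraph, IsCycleSubgraph C ∧ Even C.verts.ncard ∧ u ∈ C.verts

/-- G is the graph ∞(p,1,q): two cycles of lengths p and q sharing exactly one vertex. -/
def IsInfinityGraph (G : SimpleGraph V) (p q : ℕ) : Prop :=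
  ∃ C₁ C₂ : G.Subgraph, IsCycleSubgraph C₁ ∧ IsCycleSubgraph C₂ ∧
    C₁.verts.ncard = p ∧ C₂.verts.ncard = q ∧
    (C₁.verts ∩ C₂.verts).ncard = 1 ∧ C₁ ⊔ C₂ = ⊤

/-- G is the theta graph θ(p,l,q): three internally disjoint paths with p, l, q
vertices respectively, joining two common endvertices. -/
def IsThetaGraph (G : SimpleGraph V) (p l q : ℕ) : Prop :=
  2 ≤ p ∧ 2 ≤ l ∧ 2 ≤ q ∧ ¬(p = 2 ∧ l = 2) ∧ ¬(p = 2 ∧ q = 2) ∧ ¬(l = 2 ∧ q = 2) ∧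
  ∃ (a b : V) (W₁ W₂ W₃ : G.Walk a b), W₁.IsPath ∧ W₂.IsPath ∧ W₃.IsPath ∧
    W₁.length = p - 1 ∧ W₂.length = l - 1 ∧ W₃.length = q - 1 ∧
    (∀ v : V, v ∈ W₁.support ∨ v ∈ W₂.support ∨ v ∈ W₃.support) ∧
    (∀ e ∈ G.edgeSet, e ∈ W₁.edges ∨ e ∈ W₂.edges ∨ e ∈ W₃.edges) ∧
    {v | v ∈ W₁.support ∧ v ∈ W₂.support} = {a, b} ∧
    {v | v ∈ W₁.support ∧ v ∈ W₃.support} = {a, b} ∧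
    {v | v ∈ W₂.support ∧ v ∈ W₃.support} = {a, b}

/-- Every odd cycle of `M` has signature satisfying `P`. -/
def OddCyclesSig (M : MixedGraph V) (P : ℕ → Prop) : Prop :=
  ∀ C : M.graph.Subgraph, IsCycleSubgraph C → Odd C.verts.ncard → CycleSig M C P

/-- Every even cycle of `M`, of length `n`, has signature `s` satisfying `P n s`. -/
def EvenCyclesSig (M : MixedGraph V) (P : ℕ → ℕ → Prop) : Prop :=
  ∀ C : M.graph.Subgraph, IsCycleSubgraph C → Even C.verts.ncard →
    CycleSig M C (P C.verts.ncard)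

/-- The whole mixed graph is a single cycle. -/
def IsCycleMG (M : MixedGraph V) : Prop := IsCycleSubgraph (⊤ : M.graph.Subgraph)

/-- The family 𝔊₀. -/
def MemG0 [Fintype V] [DecidableEq V] (M : MixedGraph V) : Prop :=
  M.graph.Connected ∧ 1 ≤ cyclomatic M.graph ∧ CyclesVertexDisjoint M.graph ∧
  NoPendantVerts M.graph ∧
  ∃ (C : M.graph.Subgraph) (x : V), IsPendantCycle M.graph C x ∧ Odd C.verts.ncard ∧
    CycleSig M C Odd ∧
    ((M.induce (C.vertsᶜ ∪ {x})).hRank : ℤ) =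
      2 * (matchingNumber (M.induce (C.vertsᶜ ∪ {x})).graph : ℤ) -
        2 * cyclomatic (M.induce (C.vertsᶜ ∪ {x})).graph

/-- The family 𝔛₁ : mixed ∞(p,1,q)-graphs, p even, q odd, whose odd cycle has odd
signature and whose even cycle C̃_p satisfies σ ≡ p (mod 4). -/
def MemX1 (M : MixedGraph V) : Prop :=
  ∃ p q : ℕ, Even p ∧ Odd q ∧ IsInfinityGraph M.graph p q ∧
    OddCyclesSig M Odd ∧ EvenCyclesSig M (fun n s => s % 4 = n % 4)

/-- The family 𝔛₂ : mixed θ(p,l,q)-graphs, p even, l q odd, whose two odd cycles have odd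
signatures and whose even cycle C̃_{q+l-2} satisfies q + l + σ ≡ 2 (mod 4). -/
def MemX2 (M : MixedGraph V) : Prop :=
  ∃ p l q : ℕ, Even p ∧ Odd l ∧ Odd q ∧ IsThetaGraph M.graph p l q ∧
    OddCyclesSig M Odd ∧ EvenCyclesSig M (fun _ s => (q + l + s) % 4 = 2)

/-- The family 𝔊₂ = 𝔊₀ ∪ 𝔛₁ ∪ 𝔛₂ together with the mixed odd cycles of odd signature. -/
def MemG2 [Fintype V] [DecidableEq V] (M : MixedGraph V) : Prop :=
  MemG0 M ∨ MemX1 M ∨ MemX2 M ∨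
    (IsCycleMG M ∧ Odd (Nat.card V) ∧ CycleSig M ⊤ Odd)

/-- The family 𝔜₁. -/
def MemY1 (M : MixedGraph V) : Prop :=
  ∃ p q : ℕ, Even p ∧ Odd q ∧ IsInfinityGraph M.graph p q ∧
    OddCyclesSig M Even ∧ EvenCyclesSig M (fun n s => s % 4 = n % 4)

/-- The family 𝔜₂. -/
def MemY2 (M : MixedGraph V) : Prop :=
  ∃ p l q : ℕ, Even p ∧ Odd l ∧ Odd q ∧ IsThetaGraph M.graph p l q ∧
    OddCyclesSig M Even ∧ EvenCyclesSig M (fun _ s => (q + l + s) % 4 = 2)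

/-- `M` is a disjoint union of `k` even cycles and one odd cycle with even signature. -/
def IsDisjointUnionEvenCyclesOddCycleEvenSig (M : MixedGraph V) (k : ℤ) : Prop :=
  (∀ c : M.graph.ConnectedComponent, IsCycleMG (M.comp c)) ∧
  (({c : M.graph.ConnectedComponent | Even (Nat.card c.supp)}.ncard : ℤ) = k) ∧
  (∃! c : M.graph.ConnectedComponent, Odd (Nat.card c.supp)) ∧
  (∀ c : M.graph.ConnectedComponent, Odd (Nat.card c.supp) →
    CycleSig (M.comp c) ⊤ Even)

/-- The family 𝔉₀. -/
def MemF0 [Fintype V] [DecidableEq V] (M : MixedGraph V) : Prop :=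
  M.graph.Connected ∧ 2 ≤ cyclomatic M.graph ∧ CyclesVertexDisjoint M.graph ∧
  NoPendantVerts M.graph ∧
  (∃ (C₀ : M.graph.Subgraph) (x₀ : V), IsPendantCycle M.graph C₀ x₀ ∧ Odd C₀.verts.ncard ∧
    CycleSig M C₀ Even ∧
    ∀ C : M.graph.Subgraph, IsCycleSubgraph C → C ≠ C₀ →
      Even C.verts.ncard ∧ CycleSig M C (fun s => s % 4 = C.verts.ncard % 4)) ∧
  (∃ (Cq : M.graph.Subgraph) (x : V), IsPendantCycle M.graph Cq x ∧ Even Cq.verts.ncard ∧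
    ∃ S : Set ↥(Cq.vertsᶜ ∪ {x}),
      PendantReaches (M.induce (Cq.vertsᶜ ∪ {x})).graph S ∧
      NoPendantIn (M.induce (Cq.vertsᶜ ∪ {x})).graph S ∧
      IsDisjointUnionEvenCyclesOddCycleEvenSig
        ((M.induce (Cq.vertsᶜ ∪ {x})).induce S)
        (cyclomatic (M.induce (Cq.vertsᶜ ∪ {x})).graph))

/-- The family 𝔉₂ = 𝔉₀ ∪ 𝔜₁ ∪ 𝔜₂ together with the mixed odd cycles of even signature. -/
def MemF2 [Fintype V] [DecidableEq V] (M : MixedGraph V) : Prop :=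
  MemF0 M ∨ MemY1 M ∨ MemY2 M ∨
    (IsCycleMG M ∧ Odd (Nat.card V) ∧ CycleSig M ⊤ Even)

/-- A connected component that is either an even cycle C̃_q with σ ≡ q (mod 4),
or an isolated vertex. -/
def GoodOtherComp (M : MixedGraph V) : Prop :=
  (IsCycleMG M ∧ Even (Nat.card V) ∧
    CycleSig M ⊤ (fun s => s % 4 = (Nat.card V) % 4)) ∨
  Nat.card V = 1

/-- A fractional matching of `G`, given as a weight function on `Sym2 V` vanishing
outside the edge set. -/
def IsFracMatching [Fintype V] [DecidableEq V] (G : SimpleGraph V) (f : Sym2 V → ℝ) : Prop :=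
  (∀ e ∈ G.edgeSet, 0 ≤ f e ∧ f e ≤ 1) ∧ (∀ e, e ∉ G.edgeSet → f e = 0) ∧
    ∀ v : V, ∑ e ∈ Finset.univ.filter (fun e : Sym2 V => v ∈ e), f e ≤ 1

/-- The fractional matching number m*(G). -/
noncomputable def fracMatchingNumber [Fintype V] [DecidableEq V] (G : SimpleGraph V) : ℝ :=
  sSup {x : ℝ | ∃ f : Sym2 V → ℝ, IsFracMatching G f ∧ ∑ e : Sym2 V, f e = x}

/-- Membership in the family ℱ : fractional matchings of total weight m*(G) taking
values in {0, 1/2, 1}. -/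
def InOptFamily [Fintype V] [DecidableEq V] (G : SimpleGraph V) (f : Sym2 V → ℝ) : Prop :=
  IsFracMatching G f ∧ (∑ e : Sym2 V, f e) = fracMatchingNumber G ∧
    ∀ e : Sym2 V, f e = 0 ∨ f e = 1 / 2 ∨ f e = 1

/-- An optimal fractional matching: a member of ℱ with the largest number of
edges of weight 1. -/
def IsOptFracMatching [Fintype V] [DecidableEq V] (G : SimpleGraph V) (f : Sym2 V → ℝ) : Prop :=
  InOptFamily G f ∧
    ∀ g : Sym2 V → ℝ, InOptFamily G g →
      {e : Sym2 V | g e = 1}.ncard ≤ {e : Sym2 V | f e = 1}.ncard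

/-- E₁(C) : the edges of `G` with exactly one endpoint on the cycle `C`. -/
def cutEdges (G : SimpleGraph V) (C : G.Subgraph) : Set (Sym2 V) :=
  {e | e ∈ G.edgeSet ∧ ∃ a b : V, e = s(a, b) ∧ a ∈ C.verts ∧ b ∉ C.verts}


/-! ### Matchings as involutions -/

lemma matching_edge_count [Fintype V] {G : SimpleGraph V} (N : G.Subgraph) (hN : N.IsMatching) :
    N.verts.ncard = 2 * N.edgeSet.ncard := by
  have h := N.spanningCoe.sum_degrees_eq_twice_card_edges
  have h1 : N.spanningCoe.edgeFinset.card = N.edgeSet.ncard := by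
    rw [← Set.ncard_coe_finset]
    congr 1
    ext e
    simp
  have h2 : ∀ v, N.spanningCoe.degree v = if v ∈ N.verts then 1 else 0 := by
    intro v
    split_ifs with hv
    · obtain ⟨w, hw, hu⟩ := hN hv
      rw [SimpleGraph.degree, Finset.card_eq_one]
      refine ⟨w, ?_⟩
      ext x
      simp only [SimpleGraph.mem_neighborFinset, SimpleGraph.Subgraph.spanningCoe_adj,
        Finset.mem_singleton]
      exact ⟨fun h => hu x h, fun h => h ▸ hw⟩
    · rw [SimpleGraph.degree, Finset.card_eq_zero, Finset.eq_empty_iff_forall_notMem]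
      intro x hx
      simp only [SimpleGraph.mem_neighborFinset, SimpleGraph.Subgraph.spanningCoe_adj] at hx
      exact hv hx.fst_mem
  rw [h1] at h
  rw [← h, Finset.sum_congr rfl (fun v _ => h2 v), ← Finset.card_filter, ← Set.ncard_coe_finset]
  congr 1
  ext v
  simp

/-- A matching encoded as an involution moving vertices along edges. -/
def IsInvMatching (G : SimpleGraph V) (f : V → V) : Prop :=
  (∀ v, f (f v) = v) ∧ ∀ v, f v ≠ v → G.Adj v (f v)

lemma exists_invMatching [Fintype V] (G : SimpleGraph V) :
    ∃ f : V → V, IsInvMatching G f ∧ {v | f v ≠ v}.ncard = 2 * matchingNumber G := by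
  have hmem : matchingNumber G ∈ {k | ∃ N : G.Subgraph, N.IsMatching ∧ N.edgeSet.ncard = k} := by
    apply Nat.sSup_mem
    · exact ⟨_, ⊥, by intro v hv; simp at hv, rfl⟩
    · refine ⟨(Set.univ : Set (Sym2 V)).ncard, ?_⟩
      rintro k ⟨N, -, rfl⟩
      exact Set.ncard_le_ncard (Set.subset_univ _)
  obtain ⟨N, hN, hk⟩ := hmem
  choose g hg hu using fun v (hv : v ∈ N.verts) => hN hv
  have hf : ∀ v w, N.Adj v w → (if hv : v ∈ N.verts then g v hv else v) = w := by
    intro v w h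
    rw [dif_pos h.fst_mem]
    exact (hu v h.fst_mem w h).symm
  have hset : {v | (if hv : v ∈ N.verts then g v hv else v) ≠ v} = N.verts := by
    ext v
    constructor
    · intro h
      by_contra hv
      exact h (dif_neg hv)
    · intro hv h
      have ha : N.Adj v (g v hv) := hg v hv
      rw [dif_pos hv] at h
      rw [h] at ha
      exact ha.ne rfl
  refine ⟨fun v => if hv : v ∈ N.verts then g v hv else v, ⟨?_, ?_⟩, ?_⟩
  · intro v
    by_cases hv : v ∈ N.verts
    · simp only [dif_pos hv]
      exact hf _ _ (N.symm.symm _ _ (hg v hv))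
    · simp [hv]
  · intro v h
    have hv : v ∈ N.verts := by rw [← hset]; exact h
    simp only [dif_pos hv]
    exact N.adj_sub (hg v hv)
  · rw [hset, matching_edge_count N hN, hk]

lemma invMatching_le [Fintype V] (G : SimpleGraph V) (f : V → V) (hf : IsInvMatching G f) :
    {v | f v ≠ v}.ncard ≤ 2 * matchingNumber G := by
  let N : G.Subgraph :=
    { verts := {v | f v ≠ v}
      Adj := fun a b => f a ≠ a ∧ f a = b
      adj_sub := by
        rintro a b ⟨h, rfl⟩
        exact hf.2 a h
      edge_vert := fun h => h.1
      symm := by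
        constructor
        rintro a b ⟨h, rfl⟩
        exact ⟨by rw [hf.1]; exact h.symm, hf.1 a⟩ }
  have hN : N.IsMatching := by
    intro v hv
    exact ⟨f v, ⟨hv, rfl⟩, fun y hy => hy.2.symm⟩
  have h1 := matching_edge_count N hN
  have h2 : N.edgeSet.ncard ≤ matchingNumber G := by
    apply le_csSup
    · refine ⟨(Set.univ : Set (Sym2 V)).ncard, ?_⟩
      rintro k ⟨N, -, rfl⟩
      exact Set.ncard_le_ncard (Set.subset_univ _)
    · exact ⟨N, hN, rfl⟩
  have h3 : N.verts = {v | f v ≠ v} := rfl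
  rw [← h3]
  omega

lemma matchingNumber_delete [Fintype V] (G : SimpleGraph V) (u : V) :
    matchingNumber G ≤ matchingNumber (G.induce {u}ᶜ) + 1 := by
  obtain ⟨f, hf, hc⟩ := exists_invMatching G
  let f' : ({u}ᶜ : Set V) → ({u}ᶜ : Set V) := fun v => if h : f v = u then v else ⟨f v, h⟩
  have hval : ∀ v : ({u}ᶜ : Set V), (f' v : V) = if f v = u then (v : V) else f v := by
    intro v
    simp only [f']
    split_ifs <;> rfl
  have hf' : IsInvMatching (G.induce {u}ᶜ) f' := by
    constructor
    · intro v
      apply Subtype.ext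
      rw [hval, hval]
      have hv : (v : V) ≠ u := v.2
      by_cases h : f v = u
      · simp [h]
      · simp only [h, if_false, hf.1, hv]
    · intro v hv
      have hv' : (f' v : V) ≠ v := fun h => hv (Subtype.ext h)
      have := hval v
      by_cases h : f v = u
      · rw [if_pos h] at this
        exact absurd this hv'
      · rw [if_neg h] at this
        show G.Adj v (f' v)
        rw [this]
        exact hf.2 v (this ▸ hv')
  have h1 := invMatching_le _ f' hf'
  have h2 : {v | f v ≠ v} ⊆ (Subtype.val '' {v | f' v ≠ v}) ∪ {u, f u} := by
    intro v hv
    by_cases h1 : v = u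
    · right; left; exact h1
    by_cases h2 : f v = u
    · right; right; rw [Set.mem_singleton_iff, ← h2, hf.1]
    · left
      refine ⟨⟨v, h1⟩, ?_, rfl⟩
      intro h
      have := congrArg Subtype.val h
      rw [hval, if_neg h2] at this
      exact hv this
  have h3 := Set.ncard_le_ncard h2 (Set.toFinite _)
  have h4 := Set.ncard_union_le (Subtype.val '' {v | f' v ≠ v}) {u, f u}
  have h5 : ({u, f u} : Set V).ncard ≤ 2 := by
    have := Set.ncard_insert_le u {f u}
    rw [Set.ncard_singleton] at this
    exact this
  rw [Set.ncard_image_of_injective _ Subtype.val_injective] at h4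
  have h6 := h4.trans (Nat.add_le_add h1 h5)
  omega

/-! ### Even cycles and induced subgraphs -/

lemma map_verts_ncard {S : Set V} {G : SimpleGraph V} (C : (G.induce S).Subgraph) :
    (C.map (SimpleGraph.Embedding.induce S).toHom).verts.ncard = C.verts.ncard := by
  rw [SimpleGraph.Subgraph.map_verts]
  exact Set.ncard_image_of_injective _ Subtype.val_injective

lemma isCycle_map {S : Set V} {G : SimpleGraph V} (C : (G.induce S).Subgraph)
    (hC : IsCycleSubgraph C) :
    IsCycleSubgraph (C.map (SimpleGraph.Embedding.induce S).toHom) := by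
  constructor
  · rw [SimpleGraph.Subgraph.connected_iff']
    let φ : C.coe →g (C.map (SimpleGraph.Embedding.induce S).toHom).coe :=
      { toFun := fun v => ⟨v.1.1, v.1, v.2, rfl⟩
        map_rel' := by
          intro a b h
          exact ⟨a.1, b.1, h, rfl, rfl⟩ }
    refine hC.1.coe.map φ ?_
    rintro ⟨_, w, hw, rfl⟩
    exact ⟨⟨w, hw⟩, rfl⟩
  · rintro _ ⟨v, hv, rfl⟩
    rw [← hC.2 v hv, ← Set.ncard_image_of_injective {w | C.Adj v w} Subtype.val_injective]
    congr 1
    ext x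
    constructor
    · rintro ⟨a, b, h, h1, rfl⟩
      have : a = v := Subtype.ext h1
      subst this
      exact ⟨b, h, rfl⟩
    · rintro ⟨b, h, rfl⟩
      exact ⟨v, b, h, rfl, rfl⟩

lemma map_inj {S : Set V} {G : SimpleGraph V} :
    Function.Injective (SimpleGraph.Subgraph.map
      (SimpleGraph.Embedding.induce (G := G) S).toHom) := by
  intro C D h
  have hv : (Subtype.val '' C.verts : Set V) = Subtype.val '' D.verts :=
    congrArg SimpleGraph.Subgraph.verts h
  have ha : ∀ a b, (C.map (SimpleGraph.Embedding.induce S).toHom).Adj a b ↔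
      (D.map (SimpleGraph.Embedding.induce S).toHom).Adj a b := by rw [h]; simp
  have key : ∀ (E : (G.induce S).Subgraph) (a b : S),
      (E.map (SimpleGraph.Embedding.induce S).toHom).Adj a b ↔ E.Adj a b := by
    intro E a b
    constructor
    · rintro ⟨x, y, hxy, h1, h2⟩
      have h1 : x = a := Subtype.ext h1
      have h2 : y = b := Subtype.ext h2
      subst h1 h2
      exact hxy
    · intro h
      exact ⟨a, b, h, rfl, rfl⟩
  apply SimpleGraph.Subgraph.ext
  · exact Set.image_injective.2 Subtype.val_injective hv
  · funext a b
    rw [← key C, ← key D, ha]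

lemma evenCycleCount_delete [Fintype V] (G : SimpleGraph V) (u : V) (hu : OnEvenCycle G u) :
    evenCycleCount (G.induce {u}ᶜ) + 1 ≤ evenCycleCount G := by
  obtain ⟨C, hC, hev, huC⟩ := hu
  unfold evenCycleCount
  rw [← Set.ncard_image_of_injective _ (map_inj (S := {u}ᶜ) (G := G)),
    ← Set.ncard_insert_of_notMem (a := C) _ (Set.toFinite _)]
  · apply Set.ncard_le_ncard _ (Set.toFinite _)
    rintro D (rfl | ⟨D, ⟨hD, hDe⟩, rfl⟩)
    · exact ⟨hC, hev⟩
    · exact ⟨isCycle_map D hD, by rw [map_verts_ncard]; exact hDe⟩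
  · rintro ⟨D, -, rfl⟩
    obtain ⟨w, -, hw⟩ := huC
    exact w.2 hw

/-! ### Two perfect matchings create an even cycle -/

lemma even_cycle_of_two_matchings [Fintype V] (G : SimpleGraph V) (f g : V → V)
    (hf : ∀ v, f (f v) = v) (hg : ∀ v, g (g v) = v)
    (hfa : ∀ v, G.Adj v (f v)) (hga : ∀ v, G.Adj v (g v)) (v₀ : V) (hne : f v₀ ≠ g v₀) :
    ∃ u, OnEvenCycle G u := by
  let R : V → V → Prop := fun a b => b = f a ∨ b = g a
  have hRs : ∀ a b, R a b → R b a := by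
    rintro a b (rfl | rfl)
    · left; rw [hf]
    · right; rw [hg]
  have hRa : ∀ a b, R a b → G.Adj a b := by
    rintro a b (rfl | rfl)
    · exact hfa a
    · exact hga a
  let C : G.Subgraph :=
    { verts := {v | Relation.ReflTransGen R v₀ v}
      Adj := fun a b => Relation.ReflTransGen R v₀ a ∧ R a b
      adj_sub := fun h => hRa _ _ h.2
      edge_vert := fun h => h.1
      symm := ⟨fun a b h => ⟨h.1.tail h.2, hRs _ _ h.2⟩⟩ }
  have hdiff : ∀ v, Relation.ReflTransGen R v₀ v → f v ≠ g v := by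
    intro v hv
    induction hv with
    | refl => exact hne
    | tail _ h ih =>
      rename_i b c _
      intro hc
      rcases h with rfl | rfl
      · rw [hf] at hc
        apply ih
        have := congrArg g hc
        rw [hg] at this
        exact this.symm
      · rw [hg] at hc
        apply ih
        have := congrArg f hc
        rw [hf] at this
        exact this.symm
  refine ⟨v₀, C, ⟨?_, ?_⟩, ?_, Relation.ReflTransGen.refl⟩
  · rw [SimpleGraph.Subgraph.connected_iff', SimpleGraph.connected_iff_exists_forall_reachable]
    refine ⟨⟨v₀, Relation.ReflTransGen.refl⟩, ?_⟩
    rintro ⟨w, hw⟩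
    have hw' : Relation.ReflTransGen R v₀ w := hw
    induction hw' with
    | refl => exact SimpleGraph.Reachable.refl _
    | tail hb h ih =>
      refine (ih hb).trans (SimpleGraph.Adj.reachable ?_)
      exact ⟨hb, h⟩
  · intro v hv
    have : {w | C.Adj v w} = {f v, g v} := by
      ext w
      exact ⟨fun h => h.2, fun h => ⟨hv, h⟩⟩
    rw [this, Set.ncard_pair (hdiff v hv)]
  · let N : G.Subgraph :=
      { verts := {v | Relation.ReflTransGen R v₀ v}
        Adj := fun a b => Relation.ReflTransGen R v₀ a ∧ b = f a
        adj_sub := fun h => hRa _ _ (Or.inl h.2)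
        edge_vert := fun h => h.1
        symm := by
          constructor
          rintro a b ⟨h, rfl⟩
          exact ⟨h.tail (Or.inl rfl), (hf a).symm⟩ }
    have hN : N.IsMatching := fun v hv => ⟨f v, ⟨hv, rfl⟩, fun y hy => hy.2⟩
    have h1 := matching_edge_count N hN
    have h2 : C.verts = N.verts := rfl
    rw [h2, h1]
    exact even_two_mul _

/-! ### The determinant modulo `1 + i` -/

lemma det_adj_mod_two [Fintype V] [DecidableEq V] (G : SimpleGraph V)
    (hno : ∀ u, ¬ OnEvenCycle G u) (f : V → V) (hf : ∀ v, f (f v) = v)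
    (hfa : ∀ v, G.Adj v (f v)) (A : Matrix V V (ZMod 2))
    (hA : ∀ u v, A u v = if G.Adj u v then 1 else 0) : A.det ≠ 0 := by
  let σ₀ : Equiv.Perm V := ⟨f, f, hf, hf⟩
  have hsymm : ∀ u v, A u v = A v u := by
    intro u v
    rw [hA, hA, G.adj_comm]
  have hsgn : ∀ σ : Equiv.Perm V, ((Equiv.Perm.sign σ : ℤ) : ZMod 2) = 1 := by
    intro σ
    rcases Int.units_eq_one_or (Equiv.Perm.sign σ) with h | h <;> rw [h] <;> decide
  have hdet : A.det = ∑ σ : Equiv.Perm V, ∏ i, A (σ i) i := by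
    rw [Matrix.det_apply']
    exact Finset.sum_congr rfl fun σ _ => by rw [hsgn, one_mul]
  have hzero : ∑ σ ∈ Finset.univ.erase σ₀, ∏ i, A (σ i) i = 0 := by
    refine Finset.sum_involution (fun σ _ => σ⁻¹) ?_ ?_ ?_ ?_
    · intro σ _
      have : ∏ i, A (σ⁻¹ i) i = ∏ i, A (σ i) i := by
        rw [← Equiv.prod_comp σ (fun i => A (σ⁻¹ i) i)]
        exact Finset.prod_congr rfl fun i _ => by
          rw [show σ⁻¹ (σ i) = i from σ.symm_apply_apply i, hsymm]
      rw [this]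
      exact CharTwo.add_self_eq_zero _
    · intro σ hσ hne heq
      have hσne : σ ≠ σ₀ := (Finset.mem_erase.1 hσ).1
      have hadj : ∀ v, G.Adj v (σ v) := by
        intro v
        by_contra h
        apply hne
        apply Finset.prod_eq_zero (Finset.mem_univ v)
        rw [hA, if_neg]
        exact fun h' => h h'.symm
      have hinv : ∀ v, σ (σ v) = v := by
        intro v
        have h1 : σ⁻¹ (σ v) = v := σ.symm_apply_apply v
        rw [heq] at h1
        exact h1
      obtain ⟨v, hv⟩ : ∃ v, f v ≠ σ v := by
        by_contra! h
        exact hσne (Equiv.ext fun v => (h v).symm)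
      obtain ⟨u, hu⟩ := even_cycle_of_two_matchings G f σ hf hinv hfa hadj v hv
      exact hno u hu
    · intro σ hσ
      refine Finset.mem_erase.2 ⟨?_, Finset.mem_univ _⟩
      intro h
      apply (Finset.mem_erase.1 hσ).1
      rw [← inv_inv σ, h]
      rfl
    · intro σ _
      exact inv_inv σ
  rw [hdet, ← Finset.add_sum_erase _ _ (Finset.mem_univ σ₀), hzero, add_zero,
    Finset.prod_eq_one]
  · exact one_ne_zero
  · intro v _
    rw [hA, if_pos]
    exact (hfa v).symm

lemma hMatrix_det_ne_zero [Fintype V] [DecidableEq V] (M : MixedGraph V)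
    (hno : ∀ u, ¬ OnEvenCycle M.graph u) (f : V → V) (hf : ∀ v, f (f v) = v)
    (hfa : ∀ v, M.graph.Adj v (f v)) : M.hMatrix.det ≠ 0 := by
  let B : Matrix V V GaussianInt := fun u v =>
    if M.arc u v then ⟨0, 1⟩ else if M.arc v u then ⟨0, -1⟩
    else if M.graph.Adj u v then 1 else 0
  have hBv : ∀ u v, B u v = if M.arc u v then ⟨0, 1⟩ else if M.arc v u then ⟨0, -1⟩
    else if M.graph.Adj u v then 1 else 0 := fun _ _ => rfl
  let φ : GaussianInt →+* ZMod 2 := Zsqrtd.lift ⟨1, by decide⟩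
  have hφ : ∀ x : GaussianInt, φ x = x.re + x.im * 1 := fun x => rfl
  have hB : M.hMatrix = GaussianInt.toComplex.mapMatrix B := by
    ext u v
    rw [RingHom.mapMatrix_apply, Matrix.map_apply, hBv]
    unfold MixedGraph.hMatrix
    split_ifs <;> simp [GaussianInt.toComplex_def]
  have hmod : (φ.mapMatrix B).det ≠ 0 := by
    refine det_adj_mod_two M.graph hno f hf hfa _ ?_
    intro u v
    rw [RingHom.mapMatrix_apply, Matrix.map_apply, hBv]
    split_ifs with h1 h2 h3 h4 h5 h6
    · simp [hφ]
    · exact absurd (M.arc_adj _ _ h1) h2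
    · rw [hφ]; simp
    · exact absurd (M.arc_adj _ _ h3).symm h4
    · simp
    · simp
  rw [hB, ← RingHom.map_det]
  rw [← RingHom.map_det] at hmod
  intro h
  rw [GaussianInt.toComplex_eq_zero] at h
  rw [h] at hmod
  exact hmod (map_zero φ)

/-! ### The general lower bound -/

lemma hRank_induce_le [Fintype V] [DecidableEq V] (M : MixedGraph V) (S : Set V)
    [Fintype S] [DecidableEq S] : (M.induce S).hRank ≤ M.hRank := by
  have : (M.induce S).hMatrix = M.hMatrix.submatrix Subtype.val Subtype.val := by
    ext u v
    rfl
  unfold MixedGraph.hRank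
  rw [this]
  exact Matrix.rank_submatrix_le _ _ _

lemma hRank_lower_of_no_even [Fintype V] [DecidableEq V] (M : MixedGraph V)
    (hno : ∀ u, ¬ OnEvenCycle M.graph u) : 2 * matchingNumber M.graph ≤ M.hRank := by
  obtain ⟨f, hf, hc⟩ := exists_invMatching M.graph
  let S : Set V := {v | f v ≠ v}
  let f' : S → S := fun v => ⟨f v, by
    show f (f v) ≠ f v
    rw [hf.1]
    exact v.2.symm⟩
  have hdet : (M.induce S).hMatrix.det ≠ 0 := by
    refine hMatrix_det_ne_zero _ ?_ f' (fun v => Subtype.ext (hf.1 v)) (fun v => hf.2 v v.2)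
    rintro u ⟨C, hC, hev, hu⟩
    exact hno u ⟨_, isCycle_map C hC, (map_verts_ncard (G := M.graph) C).symm ▸ hev, ⟨u, hu, rfl⟩⟩
  have hrank : (M.induce S).hRank = Fintype.card S := by
    unfold MixedGraph.hRank
    apply Matrix.rank_of_isUnit
    rw [Matrix.isUnit_iff_isUnit_det]
    exact isUnit_iff_ne_zero.2 hdet
  have hle := hRank_induce_le M S
  rw [← hc]
  rw [hrank, ← Nat.card_eq_fintype_card] at hle
  exact hle

lemma hRank_lower (n : ℕ) : ∀ {V : Type u} [Fintype V] [DecidableEq V] (M : MixedGraph V),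
    Fintype.card V = n →
    2 * matchingNumber M.graph ≤ M.hRank + 2 * evenCycleCount M.graph := by
  induction n with
  | zero =>
    intro V _ _ M hn
    have : IsEmpty V := Fintype.card_eq_zero_iff.1 hn
    have := hRank_lower_of_no_even M (fun u => isEmptyElim u)
    omega
  | succ n ih =>
    intro V _ _ M hn
    by_cases h : ∃ u, OnEvenCycle M.graph u
    · obtain ⟨u, hu⟩ := h
      have hcard : Fintype.card ({u}ᶜ : Set V) = n := by
        rw [Fintype.card_compl_set, hn]
        simp
      have h1 := ih (M.induce {u}ᶜ) hcard
      have h2 := hRank_induce_le M {u}ᶜ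
      have h3 := matchingNumber_delete M.graph u
      have h4 := evenCycleCount_delete M.graph u hu
      change 2 * matchingNumber (M.graph.induce {u}ᶜ) ≤
        _ + 2 * evenCycleCount (M.graph.induce {u}ᶜ) at h1
      omega
    · push Not at h
      have := hRank_lower_of_no_even M h
      omega

/-- If 0 ≤ κ(G) ≤ c(G) and r(G̃) = 2m(G) − 2κ(G) + 1, then for
every vertex u on an even cycle of G: κ(G−u) = κ(G) − 1, m(G−u) = m(G) − 1, and
r(G̃−u) = 2m(G−u) − 2κ(G−u) + a_u with a_u ∈ {0,1}. -/
theorem vertex_deletion_of_hRank_eq_lower_bound_add_one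
    {V : Type u} [Fintype V] [DecidableEq V] (M : MixedGraph V)
    (hκc : (evenCycleCount M.graph : ℤ) ≤ cyclomatic M.graph)
    (hr : (M.hRank : ℤ) =
      2 * (matchingNumber M.graph : ℤ) - 2 * (evenCycleCount M.graph : ℤ) + 1) :
    ∀ u : V, OnEvenCycle M.graph u →
      (evenCycleCount (M.induce {u}ᶜ).graph : ℤ) = (evenCycleCount M.graph : ℤ) - 1 ∧
      (matchingNumber (M.induce {u}ᶜ).graph : ℤ) = (matchingNumber M.graph : ℤ) - 1 ∧
      ∃ a : ℤ, (a = 0 ∨ a = 1) ∧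
        ((M.induce {u}ᶜ).hRank : ℤ) =
          2 * (matchingNumber (M.induce {u}ᶜ).graph : ℤ) -
            2 * (evenCycleCount (M.induce {u}ᶜ).graph : ℤ) + a := by
  intro u hu
  have h1 := hRank_lower _ (M.induce {u}ᶜ) rfl
  have h2 := hRank_induce_le M {u}ᶜ
  have h3 := matchingNumber_delete M.graph u
  have h4 := evenCycleCount_delete M.graph u hu
  change 2 * matchingNumber (M.graph.induce {u}ᶜ) ≤
    _ + 2 * evenCycleCount (M.graph.induce {u}ᶜ) at h1
  change (evenCycleCount (M.graph.induce {u}ᶜ) : ℤ) = _ ∧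
    (matchingNumber (M.graph.induce {u}ᶜ) : ℤ) = _ ∧ ∃ a : ℤ, (a = 0 ∨ a = 1) ∧
      _ = 2 * (matchingNumber (M.graph.induce {u}ᶜ) : ℤ) -
        2 * (evenCycleCount (M.graph.induce {u}ᶜ) : ℤ) + a
  refine ⟨by omega, by omega, ((M.induce {u}ᶜ).hRank : ℤ) -
    (2 * (matchingNumber (M.graph.induce {u}ᶜ) : ℤ) -
      2 * (evenCycleCount (M.graph.induce {u}ᶜ) : ℤ)), by omega, by omega⟩

end MixedPaper
end

section
/- Let G~ be a mixed graph with a pendant vertex u whose unique neighbor in G is v. If r(G~) = 2m(G) − 2κ(G) + s for some s ∈ {0,1}, then v lies on no even cycle of G. -/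
open scoped Classical

namespace MixedPaper

universe u

variable {V : Type u}

/-- Two distinct perfect matchings of a vertex set `T` produce an even cycle inside `T`. -/
lemma exists_evenCycle_of_two_matchings [Finite V] (G : SimpleGraph V) (T : Set V) (σ τ : V → V)
    (hσ : ∀ a ∈ T, σ a ∈ T ∧ σ (σ a) = a ∧ G.Adj a (σ a))
    (hτ : ∀ a ∈ T, τ a ∈ T ∧ τ (τ a) = a ∧ G.Adj a (τ a))
    (i : V) (hi : i ∈ T) (hne : σ i ≠ τ i) :
    ∃ C : G.Subgraph, IsCycleSubgraph C ∧ Even C.verts.ncard ∧ C.verts ⊆ T := by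
  classical
  have := Fintype.ofFinite V
  let R : V → V → Prop := fun a b => b = σ a ∨ b = τ a
  let W : Set V := {b | Relation.ReflTransGen R i b}
  have hW : ∀ b ∈ W, b ∈ T ∧ σ b ≠ τ b := by
    intro b hb
    induction hb with
    | refl => exact ⟨hi, hne⟩
    | @tail b c _ hbc ih =>
      obtain ⟨hbT, hbn⟩ := ih
      rcases hbc with rfl | rfl
      · refine ⟨(hσ b hbT).1, fun h => hbn ?_⟩
        rw [(hσ b hbT).2.1] at h
        have h2 := (hτ _ (hσ b hbT).1).2.1
        rw [← h] at h2
        exact h2.symm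
      · refine ⟨(hτ b hbT).1, fun h => hbn ?_⟩
        rw [(hτ b hbT).2.1] at h
        have h2 := (hσ _ (hτ b hbT).1).2.1
        rw [h] at h2
        exact h2
  have hWR : ∀ a b, a ∈ W → R a b → b ∈ W := fun a b ha hab => Relation.ReflTransGen.tail ha hab
  let C : G.Subgraph :=
    { verts := W
      Adj := fun a b => a ∈ W ∧ R a b
      adj_sub := by
        rintro a b ⟨ha, rfl | rfl⟩
        · exact (hσ a (hW a ha).1).2.2
        · exact (hτ a (hW a ha).1).2.2
      edge_vert := fun h => h.1
      symm := ⟨by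
        rintro a b ⟨ha, hab⟩
        refine ⟨hWR a b ha hab, ?_⟩
        rcases hab with rfl | rfl
        · exact Or.inl (hσ a (hW a ha).1).2.1.symm
        · exact Or.inr (hτ a (hW a ha).1).2.1.symm⟩ }
  have hiW : i ∈ W := Relation.ReflTransGen.refl
  refine ⟨C, ⟨?_, ?_⟩, ?_, fun b hb => (hW b hb).1⟩
  · have key : ∀ b, ∀ hb : Relation.ReflTransGen R i b,
        C.coe.Reachable ⟨i, hiW⟩ ⟨b, hb⟩ := by
      intro b hb
      induction hb with
      | refl => exact SimpleGraph.Reachable.refl _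
      | @tail b c hb hbc ih =>
        refine ih.trans (SimpleGraph.Adj.reachable ?_)
        exact ⟨hb, hbc⟩
    refine ⟨?_⟩
    have : Nonempty C.verts := ⟨⟨i, hiW⟩⟩
    refine SimpleGraph.Connected.mk ?_
    rintro ⟨a, ha⟩ ⟨b, hb⟩
    exact (key a ha).symm.trans (key b hb)
  · intro a ha
    have : {w | C.Adj a w} = {σ a, τ a} := by
      ext w
      show (a ∈ W ∧ (w = σ a ∨ w = τ a)) ↔ _
      have ha' : a ∈ W := ha
      simp [ha']
    rw [this, Set.ncard_pair (hW a ha).2]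
  · show Even W.ncard
    have h0 : ∑ _x ∈ W.toFinset, (1 : ZMod 2) = 0 := by
      refine Finset.sum_involution (fun a _ => σ a) ?_ ?_ ?_ ?_
      · intro a _; decide
      · intro a ha _ h
        have ha' : a ∈ W := by simpa using ha
        have := (hσ a (hW a ha').1).2.2
        rw [h] at this
        exact G.loopless.irrefl _ this
      · intro a ha
        have ha' : a ∈ W := by simpa using ha
        simpa using hWR a _ ha' (Or.inl rfl)
      · intro a ha
        have ha' : a ∈ W := by simpa using ha
        exact (hσ a (hW a ha').1).2.1
    rw [Set.ncard_eq_toFinset_card']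
    rw [Finset.sum_const, nsmul_one] at h0
    exact (ZMod.natCast_eq_zero_iff_even).1 h0

/-- A symmetric matrix over `ZMod 2` with a unique involutive permutation in its support
has nonzero determinant. -/
lemma det_ne_zero_of_unique {W : Type*} [Fintype W] [DecidableEq W] (A : Matrix W W (ZMod 2))
    (hsymm : ∀ a b, A a b = A b a) (σ₀ : Equiv.Perm W) (hinv : σ₀⁻¹ = σ₀)
    (h₀ : ∀ a, A (σ₀ a) a ≠ 0)
    (huniq : ∀ σ : Equiv.Perm W, σ⁻¹ = σ → (∀ a, A (σ a) a ≠ 0) → σ = σ₀) :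
    A.det ≠ 0 := by
  have hsgn : ∀ σ : Equiv.Perm W, ((Equiv.Perm.sign σ : ℤ) : ZMod 2) = 1 := by
    intro σ
    rcases Int.units_eq_one_or (Equiv.Perm.sign σ) with h | h <;> rw [h] <;> decide
  rw [Matrix.det_apply']
  simp only [hsgn, one_mul]
  rw [← Finset.add_sum_erase _ _ (Finset.mem_univ σ₀)]
  have hz : ∑ σ ∈ Finset.univ.erase σ₀, ∏ i, A (σ i) i = 0 := by
    refine Finset.sum_involution (fun σ _ => σ⁻¹) ?_ ?_ ?_ ?_
    · intro σ _
      have : ∏ i, A (σ⁻¹ i) i = ∏ i, A (σ i) i := by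
        rw [← Equiv.prod_comp σ]
        refine Finset.prod_congr rfl fun i _ => ?_
        rw [show σ⁻¹ (σ i) = i from σ.symm_apply_apply i, hsymm]
      rw [this]
      exact CharTwo.add_self_eq_zero _
    · intro σ hσ hne h
      refine (Finset.mem_erase.1 hσ).1 (huniq σ h fun a ha => hne ?_)
      exact Finset.prod_eq_zero (Finset.mem_univ a) ha
    · intro σ hσ
      refine Finset.mem_erase.2 ⟨fun h => (Finset.mem_erase.1 hσ).1 ?_, Finset.mem_univ _⟩
      rw [← inv_inv σ, h, hinv]
    · intro σ _
      exact inv_inv σ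
  rw [hz, add_zero]
  exact Finset.prod_ne_zero_iff.2 fun a _ => h₀ a

/-- The Gaussian-integer version of the Hermitian adjacency matrix. -/
noncomputable def gaussMatrix (M : MixedGraph V) : Matrix V V GaussianInt := fun u v =>
  if M.arc u v then ⟨0, 1⟩
  else if M.arc v u then ⟨0, -1⟩
  else if M.graph.Adj u v then 1 else 0

lemma gauss_toComplex [Fintype V] [DecidableEq V] (M : MixedGraph V) (a b : V) :
    GaussianInt.toComplex (gaussMatrix M a b) = M.hMatrix a b := by
  unfold gaussMatrix MixedGraph.hMatrix
  split_ifs <;> simp [GaussianInt.toComplex_def']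

/-- Reduction of the Gaussian integers modulo `1 + i`. -/
noncomputable def redTwo : GaussianInt →+* ZMod 2 :=
  Zsqrtd.lift ⟨1, by decide⟩

lemma redTwo_gauss (M : MixedGraph V) (a b : V) :
    redTwo (gaussMatrix M a b) = if M.graph.Adj a b then 1 else 0 := by
  unfold gaussMatrix
  by_cases h1 : M.arc a b
  · have := M.arc_adj a b h1
    simp [h1, this, redTwo]
  · by_cases h2 : M.arc b a
    · have := (M.arc_adj b a h2).symm
      simp only [h1, h2, this, redTwo]
      simp
    · by_cases h3 : M.graph.Adj a b <;> simp [h1, h2, h3]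

/-- The principal submatrix on a perfectly matched vertex set without even cycles is
nonsingular. -/
lemma det_ne_zero_of_matched [Fintype V] [DecidableEq V] (M : MixedGraph V)
    (σ : Equiv.Perm V) (hinv : ∀ a, σ (σ a) = a) (hadj : ∀ a, σ a ≠ a → M.graph.Adj a (σ a))
    (hno : ∀ C : M.graph.Subgraph, IsCycleSubgraph C → Even C.verts.ncard →
      ¬ C.verts ⊆ (σ.support : Set V)) :
    (M.hMatrix.submatrix (Subtype.val : σ.support → V) Subtype.val).det ≠ 0 := by
  let B : Matrix σ.support σ.support GaussianInt :=
    (gaussMatrix M).submatrix Subtype.val Subtype.val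
  have hB : M.hMatrix.submatrix (Subtype.val : σ.support → V) Subtype.val
      = GaussianInt.toComplex.mapMatrix B := by
    ext a b
    exact (gauss_toComplex M a.1 b.1).symm
  have hA : (redTwo.mapMatrix B).det ≠ 0 := by
    have hent : ∀ a b, redTwo.mapMatrix B a b = if M.graph.Adj a.1 b.1 then 1 else 0 :=
      fun a b => redTwo_gauss M a.1 b.1
    have hent' : ∀ a b, redTwo.mapMatrix B a b ≠ 0 ↔ M.graph.Adj a.1 b.1 := by
      intro a b
      rw [hent]
      split_ifs with h <;> simp [h]
    have hmem : ∀ a : V, a ∈ σ.support ↔ σ a ∈ σ.support := fun a =>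
      (Equiv.Perm.apply_mem_support).symm
    let σ₀ : Equiv.Perm σ.support := σ.subtypePerm (fun a => (hmem a).symm)
    refine det_ne_zero_of_unique _ ?_ σ₀ ?_ ?_ ?_
    · intro a b
      rw [hent, hent]
      simp only [M.graph.adj_comm]
    · rw [inv_eq_iff_mul_eq_one]
      ext a
      simp [σ₀, hinv]
    · intro a
      rw [hent']
      exact (hadj a.1 (Equiv.Perm.mem_support.1 a.2)).symm
    · intro τ hτ hτA
      by_contra hne
      obtain ⟨i, hi⟩ : ∃ i, τ i ≠ σ₀ i := by
        by_contra h
        push Not at h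
        exact hne (Equiv.ext h)
      have hττ : ∀ a, τ (τ a) = a := by
        intro a
        conv_lhs => rw [← hτ]
        conv_lhs => rw [hτ]; rw [← hτ]
        simp [hτ]
        rw [← Equiv.Perm.eq_inv_iff_eq, hτ]
      have hτ1 : ∀ a (ha : a ∈ σ.support), Equiv.Perm.ofSubtype τ a = (τ ⟨a, ha⟩).1 := by
        intro a ha
        exact Equiv.Perm.ofSubtype_apply_of_mem τ ha
      obtain ⟨C, hC, hCe, hCT⟩ := exists_evenCycle_of_two_matchings M.graph
        (σ.support : Set V) σ (Equiv.Perm.ofSubtype τ)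
        (fun a ha => ⟨(hmem a).1 ha, hinv a, hadj a (by simpa using ha)⟩)
        (fun a ha => by
          have ha' : a ∈ σ.support := ha
          rw [hτ1 a ha']
          refine ⟨(τ ⟨a, ha'⟩).2, ?_, ?_⟩
          · rw [hτ1 _ (τ ⟨a, ha'⟩).2]
            simp [hττ]
          · exact ((hent' _ _).1 (hτA ⟨a, ha'⟩)).symm)
        i.1 i.2 (by
          rw [hτ1 i.1 i.2]
          intro h
          exact hi (Subtype.ext h.symm))
      exact hno C hC hCe hCT
  rw [hB, ← RingHom.map_det]
  intro h
  apply hA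
  rw [← RingHom.map_det]
  have : B.det = 0 := GaussianInt.toComplex_injective (by rw [h, map_zero])
  rw [this, map_zero]

/-- Removing the matching edge at `x` from an involution. -/
lemma remove_edge [Fintype V] [DecidableEq V] (G : SimpleGraph V)
    (σ : Equiv.Perm V) (hinv : ∀ a, σ (σ a) = a) (hadj : ∀ a, σ a ≠ a → G.Adj a (σ a)) (x : V) :
    ∃ σ' : Equiv.Perm V, (∀ a, σ' (σ' a) = a) ∧ (∀ a, σ' a ≠ a → G.Adj a (σ' a)) ∧
      σ'.support = (σ.support.erase x).erase (σ x) ∧ σ.support.card ≤ σ'.support.card + 2 := by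
  have hf : ∀ a, (σ * Equiv.swap x (σ x)) a = if a = x ∨ a = σ x then a else σ a := by
    intro a
    by_cases h1 : a = x
    · subst h1; simp [hinv]
    · by_cases h2 : a = σ x
      · subst h2; simp
      · simp [h1, h2, Equiv.swap_apply_of_ne_of_ne]
  have hsup : (σ * Equiv.swap x (σ x)).support = (σ.support.erase x).erase (σ x) := by
    ext a
    simp only [Equiv.Perm.mem_support, hf, Finset.mem_erase]
    split_ifs with h
    · tauto
    · tauto
  refine ⟨σ * Equiv.swap x (σ x), ?_, ?_, hsup, ?_⟩
  · intro a
    rw [hf a]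
    split_ifs with h
    · rw [hf, if_pos h]
    · rw [hf, if_neg, hinv]
      rintro (h' | h')
      · exact h (Or.inr (by rw [← h', hinv]))
      · exact h (Or.inl (σ.injective h'))
  · intro a
    rw [hf a]
    split_ifs with h
    · exact fun h => absurd rfl h
    · exact hadj a
  · rw [hsup]
    have h1 := Finset.pred_card_le_card_erase (s := σ.support) (a := x)
    have h2 := Finset.pred_card_le_card_erase (s := σ.support.erase x) (a := σ x)
    omega

/-- The even cycles inside a vertex set. -/
def evenCyclesIn (G : SimpleGraph V) (S : Set V) : Set G.Subgraph :=
  {C | IsCycleSubgraph C ∧ Even C.verts.ncard ∧ C.verts ⊆ S}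

/-- The lower bound `r ≥ 2m - 2κ`, relative to an induced subgraph. -/
lemma rank_lower_bound [Fintype V] [DecidableEq V] (M : MixedGraph V) (n : ℕ) :
    ∀ S : Finset V, S.card = n → ∀ σ : Equiv.Perm V, (∀ a, σ (σ a) = a) →
      (∀ a, σ a ≠ a → M.graph.Adj a (σ a)) → σ.support ⊆ S →
      σ.support.card ≤ (M.hMatrix.submatrix (Subtype.val : S → V) (Subtype.val : S → V)).rank
        + 2 * (evenCyclesIn M.graph (S : Set V)).ncard := by
  induction n with
  | zero =>
    intro S hS σ _ _ hsub
    have := Finset.card_le_card hsub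
    omega
  | succ n ih =>
    intro S hS σ hinv hadj hsub
    by_cases hex : ∃ C : M.graph.Subgraph,
        IsCycleSubgraph C ∧ Even C.verts.ncard ∧ C.verts ⊆ (S : Set V)
    · obtain ⟨C, hC, hCe, hCS⟩ := hex
      obtain ⟨x, hx⟩ := hC.1.nonempty
      have hxS : x ∈ S := hCS hx
      obtain ⟨σ', h1, h2, h3, h4⟩ := remove_edge M.graph σ hinv hadj x
      have hsub' : σ'.support ⊆ S.erase x := by
        rw [h3]
        exact (Finset.erase_subset _ _).trans (Finset.erase_subset_erase _ hsub)
      have key := ih (S.erase x) (by rw [Finset.card_erase_of_mem hxS]; omega) σ' h1 h2 hsub'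
      have hlt : (evenCyclesIn M.graph ((S.erase x : Finset V) : Set V)).ncard
          < (evenCyclesIn M.graph (S : Set V)).ncard := by
        refine Set.ncard_lt_ncard ?_ (Set.toFinite _)
        refine (Set.ssubset_iff_of_subset ?_).2 ⟨C, ⟨hC, hCe, hCS⟩, ?_⟩
        · rintro D ⟨hD, hDe, hDS⟩
          exact ⟨hD, hDe, fun a ha => Finset.mem_of_mem_erase (hDS ha)⟩
        · rintro ⟨_, _, h⟩
          exact Finset.notMem_erase x S (h hx)
      have hrank : (M.hMatrix.submatrix (Subtype.val : ↥(S.erase x) → V)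
            (Subtype.val : ↥(S.erase x) → V)).rank
          ≤ (M.hMatrix.submatrix (Subtype.val : S → V) (Subtype.val : S → V)).rank := by
        let f : ↥(S.erase x) → S := fun a => ⟨a.1, Finset.mem_of_mem_erase a.2⟩
        exact Matrix.rank_submatrix_le
          (M.hMatrix.submatrix (Subtype.val : S → V) (Subtype.val : S → V)) f f
      omega
    · have hdet := det_ne_zero_of_matched M σ hinv hadj (fun C hC hCe hCs =>
        hex ⟨C, hC, hCe, fun a ha => hsub (hCs ha)⟩)
      have h1 := Matrix.rank_of_isUnit _ ((Matrix.isUnit_iff_isUnit_det _).2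
        (isUnit_iff_ne_zero.2 hdet))
      let f : σ.support → S := fun a => ⟨a.1, hsub a.2⟩
      have h2 := Matrix.rank_submatrix_le
          (M.hMatrix.submatrix (Subtype.val : S → V) (Subtype.val : S → V)) f f
      have h3 : (M.hMatrix.submatrix (Subtype.val : S → V) (Subtype.val : S → V)).submatrix f f
        = M.hMatrix.submatrix (Subtype.val : σ.support → V) Subtype.val := rfl
      rw [h3, h1, Fintype.card_coe] at h2
      omega

/-- A maximum matching, as an involution. -/
lemma exists_max_matching [Fintype V] [DecidableEq V] (G : SimpleGraph V) :
    ∃ σ : Equiv.Perm V, (∀ a, σ (σ a) = a) ∧ (∀ a, σ a ≠ a → G.Adj a (σ a)) ∧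
      2 * matchingNumber G ≤ σ.support.card := by
  have hmem : matchingNumber G ∈
      {k | ∃ N : G.Subgraph, N.IsMatching ∧ N.edgeSet.ncard = k} := by
    refine Nat.sSup_mem ⟨0, ⊥, ?_, by simp⟩ ⟨(Set.univ : Set (Sym2 V)).ncard, ?_⟩
    · intro a ha
      exact absurd ha (by simp)
    · rintro k ⟨N, _, rfl⟩
      exact Set.ncard_le_ncard (Set.subset_univ _) (Set.toFinite _)
  obtain ⟨N, hN, hcard⟩ := hmem
  let f : V → V := fun a => if h : ∃ w, N.Adj a w then h.choose else a
  have hf : ∀ a b, N.Adj a b → f a = b := by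
    intro a b hab
    have h : ∃ w, N.Adj a w := ⟨b, hab⟩
    have h1 : f a = h.choose := dif_pos h
    rw [h1]
    exact (hN (N.edge_vert hab)).unique h.choose_spec hab
  have hf' : ∀ a, f a ≠ a → N.Adj a (f a) := by
    intro a ha
    by_cases h : ∃ w, N.Adj a w
    · have h1 : f a = h.choose := dif_pos h
      rw [h1]
      exact h.choose_spec
    · exact absurd (dif_neg h) ha
  have hinv : Function.Involutive f := by
    intro a
    by_cases h : f a = a
    · rw [h, h]
    · exact hf _ _ (hf' a h).symm
  refine ⟨hinv.toPerm f, hinv, fun a ha => (hf' a ha).adj_sub, ?_⟩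
  have hs : ∀ a, a ∈ (hinv.toPerm f).support ↔ f a ≠ a := fun a => Equiv.Perm.mem_support
  rw [← hcard, Set.ncard_eq_toFinset_card']
  rw [Finset.card_eq_sum_card_fiberwise (s := (hinv.toPerm f).support)
    (f := fun a => s(a, f a)) (t := N.edgeSet.toFinset)]
  · rw [mul_comm, ← smul_eq_mul]
    refine Finset.card_nsmul_le_sum _ _ _ ?_
    intro e he
    induction e using Sym2.ind with
    | _ a b =>
      have hab : N.Adj a b := by simpa using he
      have h1 := hf _ _ hab
      have h2 := hf _ _ hab.symm
      have hne : a ≠ b := hab.ne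
      rw [← Finset.card_pair hne]
      refine Finset.card_le_card ?_
      intro c hc
      simp only [Finset.mem_insert, Finset.mem_singleton] at hc
      rw [Finset.mem_filter, hs]
      rcases hc with rfl | rfl
      · rw [h1]; exact ⟨hne.symm, rfl⟩
      · rw [h2]; exact ⟨hne, Sym2.eq_swap⟩
  · intro a ha
    have := hf' a ((hs a).1 ha)
    simpa using this

/-- Deleting a pendant vertex and its neighbour lowers the rank by at least two. -/
lemma rank_pendant [Fintype V] [DecidableEq V] (H : Matrix V V ℂ) (u v : V) (huv : u ≠ v)
    (hrow : ∀ a, a ≠ v → H u a = 0) (hcol : ∀ a, a ≠ v → H a u = 0)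
    (hu : H u v ≠ 0) (hv : H v u ≠ 0) (S : Finset V) (hS : S = (Finset.univ.erase v).erase u) :
    (H.submatrix (Subtype.val : S → V) (Subtype.val : S → V)).rank + 2 ≤ H.rank := by
  have hmem : ∀ a, a ∈ S ↔ a ≠ u ∧ a ≠ v := by intro a; simp [hS]
  have hcard : S.card + 2 = Fintype.card V := by
    rw [hS, Finset.card_erase_of_mem (by simp [huv]), Finset.card_erase_of_mem (by simp),
      Finset.card_univ]
    have : 2 ≤ Fintype.card V := by
      rw [← Finset.card_pair huv]; exact Finset.card_le_univ _
    omega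
  set B := H.submatrix (Subtype.val : S → V) (Subtype.val : S → V) with hB
  have hxv : ∀ x : V → ℂ, H.mulVec x = 0 → x v = 0 := by
    intro x hx
    have h := congrFun hx u
    simp only [Matrix.mulVec, dotProduct, Pi.zero_apply] at h
    rw [Finset.sum_eq_single v (fun b _ hb => by rw [hrow b hb, zero_mul]) (by simp)] at h
    exact (mul_eq_zero.1 h).resolve_left hu
  let ρ : (V → ℂ) →ₗ[ℂ] (S → ℂ) := LinearMap.funLeft ℂ ℂ Subtype.val
  have hsum : ∀ g : V → ℂ, ∑ b, g b = g v + (g u + ∑ b : S, g b.1) := by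
    intro g
    rw [Finset.sum_coe_sort S g, hS,
      Finset.add_sum_erase _ _ (by simp [huv]), Finset.add_sum_erase _ _ (by simp)]
  have hmap : ∀ x ∈ LinearMap.ker H.mulVecLin, ρ x ∈ LinearMap.ker B.mulVecLin := by
    intro x hx
    rw [LinearMap.mem_ker, Matrix.mulVecLin_apply] at hx ⊢
    ext a
    have h := congrFun hx a.1
    simp only [Matrix.mulVec, dotProduct, Pi.zero_apply] at h ⊢
    rw [hsum, hxv x hx, hcol a.1 ((hmem _).1 a.2).2, mul_zero, zero_mul, zero_add, zero_add] at h
    exact h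
  have hinj : Function.Injective (ρ.restrict hmap) := by
    rw [← LinearMap.ker_eq_bot, LinearMap.ker_eq_bot']
    rintro ⟨x, hx⟩ h0
    have h1 : ρ x = 0 := congrArg Subtype.val h0
    have hx' : H.mulVec x = 0 := hx
    have h2 : ∀ a ∈ S, x a = 0 := fun a ha => congrFun h1 ⟨a, ha⟩
    have h3 := hxv x hx'
    have h4 : x u = 0 := by
      have h := congrFun hx' v
      simp only [Matrix.mulVec, dotProduct, Pi.zero_apply] at h
      rw [Finset.sum_eq_single u] at h
      · exact (mul_eq_zero.1 h).resolve_left hv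
      · intro b _ hb
        by_cases hbv : b = v
        · rw [hbv, h3, mul_zero]
        · rw [h2 b ((hmem b).2 ⟨hb, hbv⟩), mul_zero]
      · simp
    apply Subtype.ext
    ext a
    by_cases ha : a = u
    · rw [ha]; exact h4
    · by_cases hav : a = v
      · rw [hav]; exact h3
      · exact h2 a ((hmem a).2 ⟨ha, hav⟩)
  have hle := LinearMap.finrank_le_finrank_of_injective hinj
  have e1 := LinearMap.finrank_range_add_finrank_ker H.mulVecLin
  have e2 := LinearMap.finrank_range_add_finrank_ker B.mulVecLin
  rw [Module.finrank_fintype_fun_eq_card] at e1 e2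
  rw [Fintype.card_coe] at e2
  unfold Matrix.rank
  omega


/-- Let u be a pendant vertex of a mixed graph G̃ with unique
neighbour v. If r(G̃) = 2m(G) − 2κ(G) + s with s ∈ {0,1}, then v lies on no even
cycle of G. -/
theorem neighbour_of_pendant_not_on_even_cycle
    {V : Type u} [Fintype V] [DecidableEq V] (M : MixedGraph V) (u v : V)
    (hpend : {w | M.graph.Adj u w} = {v}) (s : ℤ) (hs : s = 0 ∨ s = 1)
    (hr : (M.hRank : ℤ) =
      2 * (matchingNumber M.graph : ℤ) - 2 * (evenCycleCount M.graph : ℤ) + s) :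
    ¬ OnEvenCycle M.graph v := by
  rintro ⟨C, hC, hCe, hvC⟩
  have hadj : ∀ w, M.graph.Adj u w ↔ w = v := fun w => by
    have := Set.ext_iff.1 hpend w
    simpa using this
  have huv' : M.graph.Adj u v := (hadj v).2 rfl
  have huv : u ≠ v := huv'.ne
  have hz : ∀ a b, ¬ M.graph.Adj a b → M.hMatrix a b = 0 := by
    intro a b h
    have h1 : ¬ M.arc a b := fun h' => h (M.arc_adj _ _ h')
    have h2 : ¬ M.arc b a := fun h' => h (M.arc_adj _ _ h').symm
    simp [MixedGraph.hMatrix, h, h1, h2]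
  have hnz : ∀ a b, M.graph.Adj a b → M.hMatrix a b ≠ 0 := by
    intro a b h
    unfold MixedGraph.hMatrix
    split_ifs <;> simp
  obtain ⟨σ, hinv, hσ, hcard⟩ := exists_max_matching M.graph
  obtain ⟨σ', h1, h2, h3, h4⟩ := remove_edge M.graph σ hinv hσ v
  have hsub : σ'.support ⊆ (Finset.univ.erase v).erase u := by
    intro a ha
    rw [h3] at ha
    simp only [Finset.mem_erase, Finset.mem_univ, and_true, Equiv.Perm.mem_support] at ha ⊢
    refine ⟨?_, ha.2.1⟩
    rintro rfl
    have h := (hadj _).1 (hσ a ha.2.2)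
    apply ha.1
    rw [← h, hinv]
  have key := rank_lower_bound M _ _ rfl σ' h1 h2 hsub
  have hrank := rank_pendant M.hMatrix u v huv
    (fun a ha => hz _ _ fun h => ha ((hadj a).1 h))
    (fun a ha => hz _ _ fun h => ha ((hadj a).1 h.symm))
    (hnz _ _ huv') (hnz _ _ huv'.symm) _ rfl
  have hlt : (evenCyclesIn M.graph (((Finset.univ.erase v).erase u : Finset V) : Set V)).ncard
      < evenCycleCount M.graph := by
    refine Set.ncard_lt_ncard ?_ (Set.toFinite _)
    refine (Set.ssubset_iff_of_subset ?_).2 ⟨C, ⟨hC, hCe⟩, ?_⟩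
    · rintro D ⟨hD, hDe, _⟩
      exact ⟨hD, hDe⟩
    · rintro ⟨_, _, h⟩
      have := h hvC
      simp at this
  unfold MixedGraph.hRank at hr
  omega

end MixedPaper
end

section
/- Let G~ be a mixed graph with a pendant vertex u whose unique neighbor in G is v, and let H~ = G~ − {u,v}. Suppose v lies on no even cycle of G. Then for any integer s with 0 ≤ s ≤ 2m*(G) − 2m(G) + 2κ(G), one has r(G~) = 2m(G) − 2κ(G) + s if and only if r(H~) = 2m(H) − 2κ(H) + s. -/
open scoped Classical

namespace MixedPaper

universe u

variable {V : Type u}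

section Helpers

open SimpleGraph

/-- Kernel comparison for the pendant deletion. -/
lemma rank_pendant_aux {V : Type u} [Fintype V] [DecidableEq V] (A : Matrix V V ℂ) (a b : V)
    (hab : a ≠ b) (h1 : A a b ≠ 0) (h2 : A b a ≠ 0)
    (hrow : ∀ w, w ≠ b → A a w = 0) (hcol : ∀ w, w ≠ b → A w a = 0)
    (S : Set V) [Fintype S] (hS : S = ({a, b} : Set V)ᶜ) (E : Matrix S S ℂ)
    (hE : E = Matrix.of fun x y : S => A x.1 y.1) :
    A.rank = E.rank + 2 := by
  have hsum : ∀ f : V → ℂ, ∑ w, f w = f a + f b + ∑ w : S, f w.1 := by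
    intro f
    rw [← Finset.sum_add_sum_compl ({a, b} : Finset V) f, Finset.sum_pair hab]
    congr 1
    apply Finset.sum_subtype
    intro x
    simp [hS]
  have hcard : Fintype.card V = Fintype.card S + 2 := by
    have := Finset.card_compl_add_card ({a, b} : Finset V)
    rw [Finset.card_pair hab] at this
    rw [← this]
    congr 1
    symm
    apply Fintype.card_of_subtype
    intro x
    simp [hS]
  have hmem : ∀ w, w ≠ a → w ≠ b → w ∈ S := by
    intro w h h'; simp [hS, h, h']
  have hSa : ∀ w : S, w.1 ≠ a := by
    rintro ⟨w, hw⟩ rfl; simp [hS] at hw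
  have hSb : ∀ w : S, w.1 ≠ b := by
    rintro ⟨w, hw⟩ rfl; simp [hS] at hw
  -- membership in kernel
  have hker : ∀ x : V → ℂ, x ∈ LinearMap.ker A.mulVecLin ↔
      x b = 0 ∧ (A b a * x a + ∑ w : S, A b w.1 * x w.1 = 0) ∧
        (fun w : S => x w.1) ∈ LinearMap.ker E.mulVecLin := by
    intro x
    simp only [LinearMap.mem_ker, Matrix.mulVecLin_apply]
    have hra : (A.mulVec x) a = A a b * x b := by
      simp only [Matrix.mulVec, dotProduct]
      rw [hsum, hrow a hab]
      rw [Finset.sum_eq_zero]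
      · ring
      · intro w _
        rw [hrow _ (hSb w), zero_mul]
    have hrb : (A.mulVec x) b = A b a * x a + A b b * x b + ∑ w : S, A b w.1 * x w.1 := by
      simp only [Matrix.mulVec, dotProduct]
      rw [hsum]
    have hrs : ∀ s : S, (A.mulVec x) s.1 = A s.1 b * x b + (E.mulVec fun w : S => x w.1) s := by
      intro s
      simp only [Matrix.mulVec, dotProduct]
      rw [hsum, hcol _ (hSb s)]
      simp [hE]
    constructor
    · intro h
      have hb : x b = 0 := by
        have := congrFun h a
        rw [hra] at this
        simpa [h1] using this
      refine ⟨hb, ?_, ?_⟩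
      · have := congrFun h b
        rw [hrb, hb] at this
        simpa using this
      · funext s
        have := congrFun h s.1
        rw [hrs, hb] at this
        simpa using this
    · rintro ⟨hb, h3, h4⟩
      funext w
      by_cases hwa : w = a
      · subst hwa; rw [hra, hb]; simp
      by_cases hwb : w = b
      · subst hwb; rw [hrb, hb]; simpa using h3
      · have := hrs ⟨w, hmem w hwa hwb⟩
        simp only at this
        rw [this, h4, hb]; simp
  let φ : LinearMap.ker A.mulVecLin →ₗ[ℂ] LinearMap.ker E.mulVecLin :=
    { toFun := fun x => ⟨fun w : S => x.1 w.1, ((hker x.1).1 x.2).2.2⟩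
      map_add' := by intro x y; rfl
      map_smul' := by intro c x; rfl }
  have hφ : Function.Bijective φ := by
    constructor
    · rw [← LinearMap.ker_eq_bot, LinearMap.ker_eq_bot']
      rintro ⟨x, hx⟩ h0
      obtain ⟨hb, h3, -⟩ := (hker x).1 hx
      have hs : ∀ w : S, x w.1 = 0 := fun w => congrFun (congrArg Subtype.val h0) w
      have ha : x a = 0 := by
        simp only [hs, mul_zero, Finset.sum_const_zero, add_zero] at h3
        simpa [h2] using h3
      apply Subtype.ext
      funext w
      by_cases hwa : w = a
      · subst hwa; exact ha
      by_cases hwb : w = b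
      · subst hwb; exact hb
      · exact hs ⟨w, hmem w hwa hwb⟩
    · rintro ⟨y, hy⟩
      let x : V → ℂ := fun w => if h : w ∈ S then y ⟨w, h⟩ else
        if w = a then -(∑ w : S, A b w.1 * y w) / A b a else 0
      have hxS : ∀ w : S, x w.1 = y w := by
        intro w; simp [x, w.2]
      have hxa : x a = -(∑ w : S, A b w.1 * y w) / A b a := by
        simp [x, hS]
      have hxb : x b = 0 := by
        simp [x, hS, hab.symm]
      have hx : x ∈ LinearMap.ker A.mulVecLin := by
        rw [hker]
        refine ⟨hxb, ?_, ?_⟩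
        · simp only [hxS, hxa]
          field_simp
          ring
        · simp only [hxS]; exact hy
      refine ⟨⟨x, hx⟩, ?_⟩
      apply Subtype.ext
      funext w
      exact hxS w
  have hdim := (LinearEquiv.ofBijective φ hφ).finrank_eq
  have e1 := A.mulVecLin.finrank_range_add_finrank_ker
  have e2 := E.mulVecLin.finrank_range_add_finrank_ker
  rw [Module.finrank_fintype_fun_eq_card] at e1 e2
  unfold Matrix.rank
  omega

lemma hRank_pendant {V : Type u} [Fintype V] [DecidableEq V] (M : MixedGraph V) (a b : V)
    (hpend : ∀ w, M.graph.Adj a w ↔ w = b) :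
    M.hRank = (M.induce ({a, b} : Set V)ᶜ).hRank + 2 := by
  have hadj : M.graph.Adj a b := (hpend b).2 rfl
  have hnz : ∀ x y, M.graph.Adj x y → M.hMatrix x y ≠ 0 := by
    intro x y h
    unfold MixedGraph.hMatrix
    split_ifs <;> simp
  have hz : ∀ x y, ¬ M.graph.Adj x y → M.hMatrix x y = 0 := by
    intro x y h
    unfold MixedGraph.hMatrix
    rw [if_neg (fun h' => h (M.arc_adj _ _ h')), if_neg (fun h' => h (M.arc_adj _ _ h').symm),
      if_neg h]
  have := rank_pendant_aux M.hMatrix a b hadj.ne (hnz _ _ hadj) (hnz _ _ hadj.symm)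
    (fun w hw => hz _ _ (fun h => hw ((hpend w).1 h)))
    (fun w hw => hz _ _ (fun h => hw ((hpend w).1 h.symm)))
    ({a, b} : Set V)ᶜ rfl (M.induce ({a, b} : Set V)ᶜ).hMatrix (by
      ext x y
      simp [MixedGraph.hMatrix, MixedGraph.induce])
  unfold MixedGraph.hRank
  exact this

lemma matching_bdd {V : Type u} [Finite V] (G : SimpleGraph V) :
    BddAbove {k | ∃ N : G.Subgraph, N.IsMatching ∧ N.edgeSet.ncard = k} := by
  have : {k | ∃ N : G.Subgraph, N.IsMatching ∧ N.edgeSet.ncard = k} ⊆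
      Set.range (fun N : G.Subgraph => N.edgeSet.ncard) := by
    rintro k ⟨N, -, rfl⟩; exact ⟨N, rfl⟩
  exact ((Set.finite_range _).subset this).bddAbove

lemma matching_mem {V : Type u} [Finite V] (G : SimpleGraph V) :
    ∃ N : G.Subgraph, N.IsMatching ∧ N.edgeSet.ncard = matchingNumber G := by
  have : matchingNumber G ∈ {k | ∃ N : G.Subgraph, N.IsMatching ∧ N.edgeSet.ncard = k} := by
    apply Nat.sSup_mem _ (matching_bdd G)
    refine ⟨0, ⊥, ?_, by simp⟩
    intro v hv
    simp at hv
  exact this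

lemma le_matching {V : Type u} [Finite V] (G : SimpleGraph V) (N : G.Subgraph)
    (hN : N.IsMatching) : N.edgeSet.ncard ≤ matchingNumber G :=
  le_csSup (matching_bdd G) ⟨N, hN, rfl⟩

lemma matching_pendant {V : Type u} [Finite V] (G : SimpleGraph V) (a b : V)
    (hpend : ∀ w, G.Adj a w ↔ w = b) :
    matchingNumber G = matchingNumber (G.induce ({a, b} : Set V)ᶜ) + 1 := by
  have hadj : G.Adj a b := (hpend b).2 rfl
  let f : G.induce ({a, b} : Set V)ᶜ →g G := (Embedding.induce _).toHom
  have hf : Function.Injective f := (Embedding.induce (G := G) ({a, b} : Set V)ᶜ).injective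
  have hfv : ∀ x, f x = x.1 := fun x => rfl
  apply le_antisymm
  · obtain ⟨N, hN, hk⟩ := matching_mem G
    let N' : (G.induce ({a, b} : Set V)ᶜ).Subgraph :=
      { verts := {x | ∃ y : (({a, b} : Set V)ᶜ : Set V), N.Adj x.1 y.1}
        Adj := fun x y => N.Adj x.1 y.1
        adj_sub := fun h => N.adj_sub h
        edge_vert := fun {x y} h => ⟨y, h⟩
        symm.symm := fun x y h => N.adj_symm h }
    have hN' : N'.IsMatching := by
      rintro x ⟨y, hy⟩
      exact ⟨y, hy, fun z hz => Subtype.ext (hN.eq_of_adj_left hz hy)⟩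
    have hsub : N.edgeSet ⊆ (N'.map f).edgeSet ∪ {e | e ∈ N.edgeSet ∧ b ∈ e} := by
      intro e he
      by_cases hbe : b ∈ e
      · exact Or.inr ⟨he, hbe⟩
      left
      induction e with
      | _ x y =>
        simp only [Sym2.mem_iff, not_or] at hbe
        have hxy : N.Adj x y := he
        have hxa : x ≠ a := by
          rintro rfl
          exact hbe.2 ((hpend y).1 (N.adj_sub hxy)).symm
        have hya : y ≠ a := by
          rintro rfl
          exact hbe.1 ((hpend x).1 (N.adj_sub hxy).symm).symm
        have hx : x ∈ ({a, b} : Set V)ᶜ := by simp [hxa, Ne.symm hbe.1]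
        have hy : y ∈ ({a, b} : Set V)ᶜ := by simp [hya, Ne.symm hbe.2]
        exact ⟨⟨x, hx⟩, ⟨y, hy⟩, hxy, rfl, rfl⟩
    have hone : {e | e ∈ N.edgeSet ∧ b ∈ e}.ncard ≤ 1 := by
      rw [Set.ncard_le_one (Set.toFinite _)]
      rintro e ⟨he, hbe⟩ e' ⟨he', hbe'⟩
      obtain ⟨y, rfl⟩ := Sym2.mem_iff_exists.1 hbe
      obtain ⟨y', rfl⟩ := Sym2.mem_iff_exists.1 hbe'
      have hyy : y = y' := hN.eq_of_adj_left he he'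
      rw [hyy]
    have h1 := Set.ncard_le_ncard hsub (Set.toFinite _)
    have h2 := Set.ncard_union_le (N'.map f).edgeSet {e | e ∈ N.edgeSet ∧ b ∈ e}
    have h3 := le_matching _ N' hN'
    rw [Subgraph.edgeSet_map, Set.ncard_image_of_injective _ (Sym2.map.injective hf)] at h2
    rw [Subgraph.edgeSet_map] at h1
    omega
  · obtain ⟨N, hN, hk⟩ := matching_mem (G.induce ({a, b} : Set V)ᶜ)
    have hm1 := hN.map f hf
    have hm2 := Subgraph.IsMatching.subgraphOfAdj hadj
    have hd : Disjoint (N.map f).support (G.subgraphOfAdj hadj).support := by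
      rw [Set.disjoint_left]
      rintro x ⟨y, p, q, -, rfl, -⟩ hx
      have hx' := (Subgraph.support_subset_verts _) hx
      exact p.2 hx'
    have := le_matching _ _ (hm1.sup hm2 hd)
    rw [Subgraph.edgeSet_sup, Set.ncard_union_eq ?_ (Set.toFinite _) (Set.toFinite _),
      Subgraph.edgeSet_map, Set.ncard_image_of_injective _ (Sym2.map.injective hf),
      edgeSet_subgraphOfAdj, Set.ncard_singleton, hk] at this
    · exact this
    · rw [edgeSet_subgraphOfAdj, Set.disjoint_singleton_right]
      rintro ⟨p, q, -, h, -⟩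
      exact p.2 (by rw [← hfv, h]; simp)

/-- The image of a subgraph under an injective homomorphism is isomorphic to it. -/
noncomputable def mapIso {V W : Type u} {G : SimpleGraph V} {H : SimpleGraph W} (f : H →g G)
    (hf : Function.Injective f) (D : H.Subgraph) : D.coe ≃g (D.map f).coe where
  toEquiv := Equiv.Set.image f D.verts hf
  map_rel_iff' := by
    rintro ⟨x, hx⟩ ⟨y, hy⟩
    constructor
    · rintro ⟨p, q, h, hp, hq⟩
      have hp' : p = x := hf hp
      have hq' : q = y := hf hq
      subst hp' hq'
      exact h
    · intro h
      exact ⟨x, y, h, rfl, rfl⟩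

lemma isCycle_map_iff {V W : Type u} {G : SimpleGraph V} {H : SimpleGraph W} (f : H →g G)
    (hf : Function.Injective f) (D : H.Subgraph) :
    IsCycleSubgraph (D.map f) ↔ IsCycleSubgraph D := by
  have hn : ∀ x, {w | (D.map f).Adj (f x) w} = f '' {w | D.Adj x w} := by
    intro x
    ext w
    constructor
    · rintro ⟨p, q, h, hp, rfl⟩
      have := hf hp
      subst this
      exact ⟨q, h, rfl⟩
    · rintro ⟨q, h, rfl⟩
      exact ⟨x, q, h, rfl, rfl⟩
  unfold IsCycleSubgraph
  rw [Subgraph.connected_iff', Subgraph.connected_iff', (mapIso f hf D).connected_iff]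
  refine and_congr_right fun _ => ?_
  simp only [Subgraph.map_verts, Set.forall_mem_image, hn, Set.ncard_image_of_injective _ hf]

lemma evenCycle_pendant {V : Type u} [Finite V] (G : SimpleGraph V) (a b : V)
    (hpend : ∀ w, G.Adj a w ↔ w = b) (hb : ¬ OnEvenCycle G b) :
    evenCycleCount G = evenCycleCount (G.induce ({a, b} : Set V)ᶜ) := by
  let f : G.induce ({a, b} : Set V)ᶜ →g G := (Embedding.induce _).toHom
  have hf : Function.Injective f := (Embedding.induce (G := G) ({a, b} : Set V)ᶜ).injective
  have hfv : ∀ x, f x = x.1 := fun x => rfl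
  have hinj : Function.Injective (Subgraph.map f) := by
    intro D D' h
    have key : ∀ D : (G.induce ({a, b} : Set V)ᶜ).Subgraph, (D.map f).comap f = D := by
      intro D
      ext x y
      · simp [hf.eq_iff]
      · simp only [Subgraph.comap_adj, Subgraph.map_adj]
        constructor
        · rintro ⟨-, p, q, h, hp, hq⟩
          rw [← hf hp, ← hf hq]; exact h
        · intro h
          exact ⟨D.adj_sub h, x, y, h, rfl, rfl⟩
    rw [← key D, ← key D', h]
  unfold evenCycleCount
  rw [← Set.ncard_image_of_injective _ hinj]
  congr 1
  ext C
  constructor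
  · rintro ⟨hC, hE⟩
    have hbC : b ∉ C.verts := fun h => hb ⟨C, hC, hE, h⟩
    have haC : a ∉ C.verts := by
      intro h
      have h2 := hC.2 a h
      have : {w | C.Adj a w} ⊆ {b} := fun w hw => (hpend w).1 (C.adj_sub hw)
      have := Set.ncard_le_ncard this (Set.toFinite _)
      rw [Set.ncard_singleton] at this
      omega
    have hS : ∀ x ∈ C.verts, x ∈ ({a, b} : Set V)ᶜ := by
      intro x hx h
      rcases h with rfl | rfl
      · exact haC hx
      · exact hbC hx
    have hCC : (C.comap f).map f = C := by
      ext x y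
      · constructor
        · rintro ⟨p, hp, rfl⟩; exact hp
        · intro hx; exact ⟨⟨x, hS x hx⟩, hx, rfl⟩
      · constructor
        · rintro ⟨p, q, h, rfl, rfl⟩; exact h.2
        · intro h
          exact ⟨⟨x, hS x h.fst_mem⟩, ⟨y, hS y h.snd_mem⟩, ⟨C.adj_sub h, h⟩, rfl, rfl⟩
    refine ⟨C.comap f, ⟨?_, ?_⟩, hCC⟩
    · rw [← isCycle_map_iff f hf, hCC]; exact hC
    · rw [← hCC, Subgraph.map_verts, Set.ncard_image_of_injective _ hf] at hE
      exact hE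
  · rintro ⟨D, ⟨hD, hE⟩, rfl⟩
    refine ⟨(isCycle_map_iff f hf D).2 hD, ?_⟩
    rw [Subgraph.map_verts, Set.ncard_image_of_injective _ hf]
    exact hE

end Helpers

/-- Let u be a pendant vertex of G̃ with unique neighbour v lying
on no even cycle of G, and let H̃ = G̃ − {u,v}. Then for every integer s with
0 ≤ s ≤ 2m*(G) − 2m(G) + 2κ(G):  r(G̃) = 2m(G) − 2κ(G) + s iff
r(H̃) = 2m(H) − 2κ(H) + s. -/
theorem pendant_deletion_rank_iff
    {V : Type u} [Fintype V] [DecidableEq V] (M : MixedGraph V) (u v : V)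
    (hpend : {w | M.graph.Adj u w} = {v}) (hv : ¬ OnEvenCycle M.graph v)
    (s : ℤ) (hs0 : 0 ≤ s)
    (hs1 : (s : ℝ) ≤ 2 * fracMatchingNumber M.graph
      - 2 * (matchingNumber M.graph : ℝ) + 2 * (evenCycleCount M.graph : ℝ)) :
    ((M.hRank : ℤ) =
        2 * (matchingNumber M.graph : ℤ) - 2 * (evenCycleCount M.graph : ℤ) + s ↔
      ((M.induce ({u, v} : Set V)ᶜ).hRank : ℤ) =
        2 * (matchingNumber (M.induce ({u, v} : Set V)ᶜ).graph : ℤ) -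
          2 * (evenCycleCount (M.induce ({u, v} : Set V)ᶜ).graph : ℤ) + s) := by
  have hp : ∀ w, M.graph.Adj u w ↔ w = v := fun w => by
    have := Set.ext_iff.1 hpend w
    simpa using this
  have h1 := hRank_pendant M u v hp
  have h2 := matching_pendant M.graph u v hp
  have h3 := evenCycle_pendant M.graph u v hp hv
  change _ = matchingNumber (M.induce ({u, v} : Set V)ᶜ).graph + 1 at h2
  change _ = evenCycleCount (M.induce ({u, v} : Set V)ᶜ).graph at h3
  rw [h1, h2, h3]
  push_cast
  constructor <;> intro h <;> linarith

end MixedPaper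
end
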